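/- arXiv:1911.04590 — 3 statements merged into one kernel-verified Lean document; each statement's English description precedes it below -/
import Mathlib

section
/- (Proposition on extension to centralizer subalgebras, extension form.) Under the hypotheses in the context, the bimodule M extends to the diagonal subalgebra of C ⊗ C'ᵒᵖ, where C = b·k[N·C_G(N)] and C' = b'·k[N'·C_G(N)]: there exists a group homomorphism ρ from K := {(x,y) ∈ (N·C_G(N)) × (N'·C_G(N)) : x⁻¹y ∈ N} to the group of k-linear automorphisms of M such that ρ(n, n')(m) = π(single n 1)·m·π'(single n'⁻¹ 1) for all n ∈ N, n' ∈ N', m ∈ M. -/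
open scoped TensorProduct
open MonoidAlgebra

noncomputable section

/-- The block algebra: the quotient of `R` by the two-sided ideal generated by `1 - e`. -/
abbrev BlockQuot {R : Type} [Ring R] (e : R) : Type :=
  (TwoSidedIdeal.span {1 - e}).ringCon.Quotient

/-- The canonical projection onto the block algebra. -/
def blockPi {R : Type} [Ring R] (e : R) : R →+* BlockQuot e where
  toFun r := ((r : R) : (TwoSidedIdeal.span {1 - e}).ringCon.Quotient)
  map_one' := RingCon.coe_one _
  map_mul' := RingCon.coe_mul _
  map_zero' := RingCon.coe_zero _
  map_add' := RingCon.coe_add _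

instance blockAlgebra {k R : Type} [CommRing k] [Ring R] [Algebra k R] (e : R) :
    Algebra k (BlockQuot e) :=
  RingHom.toAlgebra' ((blockPi e).comp (algebraMap k R)) (by
    intro c x
    induction x using Quotient.inductionOn' with
    | h r =>
      show ((algebraMap k R c : R) : BlockQuot e) * ↑r = ↑r * ↑(algebraMap k R c)
      rw [← RingCon.coe_mul, ← RingCon.coe_mul, Algebra.commutes])

/-- `M` induces a Morita equivalence between `B` and `B'`: it is a finitely generated
projective generator as a left `B`-module and the right `B'`-action gives a ring
isomorphism of `B'ᵐᵒᵖ` onto `End_B(M)`. -/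
def InducesMorita (k : Type) [CommRing k] (B B' : Type) [Ring B] [Ring B']
    [Algebra k B] [Algebra k B'] (M : Type) [AddCommGroup M]
    [Module (B ⊗[k] B'ᵐᵒᵖ) M] : Prop :=
  letI : Module B M :=
    Module.compHom M (Algebra.TensorProduct.includeLeftRingHom : B →+* B ⊗[k] B'ᵐᵒᵖ)
  Module.Finite B M ∧ Module.Projective B M ∧
    (∃ (n : ℕ) (f : (Fin n → M) →ₗ[B] B), Function.Surjective f) ∧
    ∃ φ : B'ᵐᵒᵖ →+* Module.End B M,
      Function.Bijective φ ∧ ∀ (β' : B'ᵐᵒᵖ) (m : M), φ β' m = ((1 : B) ⊗ₜ[k] β') • m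

/-- The subgroup `{(x, y) : x ∈ H₁, y ∈ G' and x⁻¹y ∈ H}` of `G × G`, for `H` normal. -/
def diagSubgroup {G : Type} [Group G] (H₁ G' H : Subgroup G) (hH : H.Normal) :
    Subgroup (G × G) where
  carrier := {p | p.1 ∈ H₁ ∧ p.2 ∈ G' ∧ p.1⁻¹ * p.2 ∈ H}
  one_mem' := ⟨H₁.one_mem, G'.one_mem, by simpa using H.one_mem⟩
  mul_mem' := by
    rintro ⟨a, b⟩ ⟨c, d⟩ ⟨ha, hb, hab⟩ ⟨hc, hd, hcd⟩
    refine ⟨H₁.mul_mem ha hc, G'.mul_mem hb hd, ?_⟩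
    have h1 : c⁻¹ * (a⁻¹ * b) * c⁻¹⁻¹ ∈ H := hH.conj_mem _ hab c⁻¹
    have key : (a * c)⁻¹ * (b * d) = (c⁻¹ * (a⁻¹ * b) * c⁻¹⁻¹) * (c⁻¹ * d) := by group
    show (a * c)⁻¹ * (b * d) ∈ H
    rw [key]
    exact H.mul_mem h1 hcd
  inv_mem' := by
    rintro ⟨a, b⟩ ⟨ha, hb, hab⟩
    refine ⟨H₁.inv_mem ha, G'.inv_mem hb, ?_⟩
    have h1 : b * (a⁻¹ * b)⁻¹ * b⁻¹ ∈ H := hH.conj_mem _ (H.inv_mem hab) b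
    have key : a⁻¹⁻¹ * b⁻¹ = b * (a⁻¹ * b)⁻¹ * b⁻¹ := by group
    show a⁻¹⁻¹ * b⁻¹ ∈ H
    rw [key]
    exact h1

/-- **Extension to centralizer subalgebras** (Marcus–Minuță, Proposition 4.2, extension form).
If `M` is a `(B, B')`-bimodule inducing a Morita equivalence between the blocks
`B = b·kN` and `B' = b'·kN'` on which `Z(N)` acts identically on both sides, then `M`
extends to the diagonal subalgebra of `C ⊗ C'ᵒᵖ`, where `C = b·k[N·C_G(N)]` and
`C' = b'·k[N'·C_G(N)]`. -/
theorem extension_to_centralizers (k : Type) [CommRing k] (G : Type) [Group G]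
    (N : Subgroup G) [hN : N.Normal] (G' : Subgroup G)
    (hC : Subgroup.centralizer (N : Set G) ≤ G')
    (hGG' : N ⊔ G' = ⊤)
    (b : MonoidAlgebra k ↥N)
    (hbc : b ∈ Subring.center (MonoidAlgebra k ↥N)) (hbi : IsIdempotentElem b)
    (hbinv : ∀ g : G,
      single g (1 : k) * mapDomainRingHom k N.subtype b * single g⁻¹ (1 : k) =
        mapDomainRingHom k N.subtype b)
    (b' : MonoidAlgebra k ↥(G' ⊓ N))
    (hb'c : b' ∈ Subring.center (MonoidAlgebra k ↥(G' ⊓ N))) (hb'i : IsIdempotentElem b')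
    (hb'inv : ∀ g' : ↥G',
      single g' (1 : k) *
          mapDomainRingHom k (Subgroup.inclusion (inf_le_left : G' ⊓ N ≤ G')) b' *
          single g'⁻¹ (1 : k) =
        mapDomainRingHom k (Subgroup.inclusion (inf_le_left : G' ⊓ N ≤ G')) b')
    (M : Type) [AddCommGroup M] [Module k M]
    [Module (BlockQuot b ⊗[k] (BlockQuot b')ᵐᵒᵖ) M]
    [IsScalarTower k (BlockQuot b ⊗[k] (BlockQuot b')ᵐᵒᵖ) M]
    (hM : InducesMorita k (BlockQuot b) (BlockQuot b') M)
    (hZ : ∀ z : ↥N, z ∈ Subgroup.center ↥N → ∀ hz' : (z : G) ∈ G' ⊓ N, ∀ m : M,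
      (blockPi b (single z (1 : k)) ⊗ₜ[k] (1 : (BlockQuot b')ᵐᵒᵖ)) • m =
        ((1 : BlockQuot b) ⊗ₜ[k]
          MulOpposite.op (blockPi b' (single (⟨(z : G), hz'⟩ : ↥(G' ⊓ N)) (1 : k)))) • m) :
    ∃ ρ : ↥(diagSubgroup (N ⊔ Subgroup.centralizer (N : Set G))
        ((G' ⊓ N) ⊔ Subgroup.centralizer (N : Set G)) N hN) →*
        (M ≃ₗ[k] M),
      ∀ (κ : ↥(diagSubgroup (N ⊔ Subgroup.centralizer (N : Set G))
          ((G' ⊓ N) ⊔ Subgroup.centralizer (N : Set G)) N hN))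
        (n : ↥N) (n' : ↥(G' ⊓ N)) (m : M),
        (κ : G × G) = ((n : G), (n' : G)) →
          ρ κ m =
            (blockPi b (single n (1 : k)) ⊗ₜ[k]
              MulOpposite.op (blockPi b' (single n'⁻¹ (1 : k)))) • m := by
  classical
  set C := Subgroup.centralizer (N : Set G) with hCdef
  let u : ↥N → ↥(G' ⊓ N) → (BlockQuot b ⊗[k] (BlockQuot b')ᵐᵒᵖ) := fun n n' =>
    blockPi b (single n (1 : k)) ⊗ₜ[k] MulOpposite.op (blockPi b' (single n'⁻¹ (1 : k)))
  have hu1 : u 1 1 = 1 := by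
    simp only [u, inv_one]
    rw [← MonoidAlgebra.one_def, ← MonoidAlgebra.one_def, map_one, map_one]
    rfl
  have humul : ∀ n₁ n₂ n₁' n₂', u (n₁ * n₂) (n₁' * n₂') = u n₁ n₁' * u n₂ n₂' := by
    intro n₁ n₂ n₁' n₂'
    simp only [u]
    rw [Algebra.TensorProduct.tmul_mul_tmul, ← MulOpposite.op_mul, ← map_mul, ← map_mul,
      MonoidAlgebra.single_mul_single, MonoidAlgebra.single_mul_single, mul_one, mul_inv_rev]
  have huz : ∀ (z : ↥N) (z' : ↥(G' ⊓ N)), (z : G) = z' → (z : G) ∈ C →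
      ∀ m : M, u z z' • m = m := by
    intro z z' hzz hzC m
    have hzc : z ∈ Subgroup.center ↥N := by
      rw [Subgroup.mem_center_iff]
      intro g
      exact Subtype.ext (Subgroup.mem_centralizer_iff.1 hzC g g.2)
    have hz' : (z : G) ∈ G' ⊓ N := hzz ▸ z'.2
    have e : z' = ⟨(z : G), hz'⟩ := Subtype.ext hzz.symm
    have h1 : u z z' = u 1 z' * u z 1 := by rw [← humul, one_mul, mul_one]
    have h2 : u z 1 • m = u 1 z'⁻¹ • m := by
      have := hZ z hzc hz' m
      rw [← e] at this
      simp only [u, inv_one, inv_inv]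
      rw [← MonoidAlgebra.one_def, ← MonoidAlgebra.one_def, map_one, map_one]
      exact this
    rw [h1, mul_smul, h2, ← mul_smul, ← humul, mul_inv_cancel, one_mul, hu1, one_smul]
  have hex : ∀ κ : ↥(diagSubgroup (N ⊔ C) ((G' ⊓ N) ⊔ C) N hN),
      ∃ (n : ↥N) (n' : ↥(G' ⊓ N)) (c : G), c ∈ C ∧
        (κ : G × G) = ((n : G) * c, (n' : G) * c) := by
    rintro ⟨⟨x, y⟩, hx, hy, hxy⟩
    have hCn : C.Normal := inferInstance
    obtain ⟨n, hn, c, hc, rfl⟩ := Subgroup.mem_sup_of_normal_right.1 hx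
    obtain ⟨n', hn', c', hc', rfl⟩ := Subgroup.mem_sup_of_normal_right.1 hy
    have hzC : c' * c⁻¹ ∈ C := C.mul_mem hc' (C.inv_mem hc)
    have hzN : c' * c⁻¹ ∈ N := by
      have h1 : c * ((n * c)⁻¹ * (n' * c')) * c⁻¹ ∈ N := hN.conj_mem _ hxy c
      have h2 : c' * c⁻¹ = n'⁻¹ * n * (c * ((n * c)⁻¹ * (n' * c')) * c⁻¹) := by group
      rw [h2]
      exact N.mul_mem (N.mul_mem (N.inv_mem hn'.2) hn) h1
    refine ⟨⟨n, hn⟩, ⟨n' * (c' * c⁻¹), (G' ⊓ N).mul_mem hn' ⟨hC hzC, hzN⟩⟩, c, hc, ?_⟩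
    simp [mul_assoc]
  have hwd : ∀ (n₁ n₂ : ↥N) (n₁' n₂' : ↥(G' ⊓ N)) (c₁ c₂ : G), c₁ ∈ C → c₂ ∈ C →
      (n₁ : G) * c₁ = n₂ * c₂ → (n₁' : G) * c₁ = n₂' * c₂ → ∀ m : M,
      u n₁ n₁' • m = u n₂ n₂' • m := by
    intro n₁ n₂ n₁' n₂' c₁ c₂ hc₁ hc₂ h h' m
    have e1 : (n₂ : G)⁻¹ * n₁ = c₂ * c₁⁻¹ := by
      rw [inv_mul_eq_iff_eq_mul, ← mul_assoc, ← h]; group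
    have e2 : (n₂' : G)⁻¹ * n₁' = c₂ * c₁⁻¹ := by
      rw [inv_mul_eq_iff_eq_mul, ← mul_assoc, ← h']; group
    have h3 := huz (n₂⁻¹ * n₁) (n₂'⁻¹ * n₁') (by push_cast; rw [e1, e2])
      (by push_cast; rw [e1]; exact C.mul_mem hc₂ (C.inv_mem hc₁)) m
    conv_rhs => rw [← h3]
    rw [← mul_smul, ← humul, mul_inv_cancel_left, mul_inv_cancel_left]
  choose f f' c hcC hf using hex
  have : SMulCommClass (BlockQuot b ⊗[k] (BlockQuot b')ᵐᵒᵖ) k M :=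
    IsScalarTower.to_smulCommClass'
  let L := Algebra.lsmul k k M (A := BlockQuot b ⊗[k] (BlockQuot b')ᵐᵒᵖ)
  let ρ₀ : ↥(diagSubgroup (N ⊔ C) ((G' ⊓ N) ⊔ C) N hN) →* Module.End k M :=
    { toFun := fun κ => L (u (f κ) (f' κ))
      map_one' := by
        ext m
        have h := hf 1
        have h1 := congrArg Prod.fst h
        have h2 := congrArg Prod.snd h
        refine (hwd _ 1 _ 1 _ 1 (hcC 1) C.one_mem ?_ ?_ m).trans (by rw [hu1, one_smul]; rfl)
        · simpa using h1.symm
        · simpa using h2.symm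
      map_mul' := by
        intro x y
        ext m
        have h := hf (x * y)
        rw [Subgroup.coe_mul, hf x, hf y] at h
        have h1 := congrArg Prod.fst h
        have h2 := congrArg Prod.snd h
        have k1 := Subgroup.mem_centralizer_iff.1 (hcC x) (f y) (f y).2
        have k2 := Subgroup.mem_centralizer_iff.1 (hcC x) (f' y) (f' y).2.2
        simp only [Prod.mk_mul_mk] at h1 h2
        refine (hwd _ (f x * f y) _ (f' x * f' y) _ (c x * c y) (hcC (x * y))
          (C.mul_mem (hcC x) (hcC y)) ?_ ?_ m).trans ?_
        · rw [← h1, Subgroup.coe_mul, mul_assoc, mul_assoc, ← mul_assoc (c x), ← k1]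
          simp only [mul_assoc]
        · rw [← h2, Subgroup.coe_mul, mul_assoc, mul_assoc, ← mul_assoc (c x), ← k2]
          simp only [mul_assoc]
        · rw [humul, mul_smul]
          rfl }
  refine ⟨(LinearMap.GeneralLinearGroup.generalLinearEquiv k M).toMonoidHom.comp
    ρ₀.toHomUnits, ?_⟩
  intro κ n n' m hκ
  have h := hf κ
  rw [hκ] at h
  have h1 := congrArg Prod.fst h
  have h2 := congrArg Prod.snd h
  exact hwd _ n _ n' _ 1 (hcC κ) C.one_mem (by simpa using h1.symm) (by simpa using h2.symm) m
end
end

section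
/- Then: (a) C_Ĝ(j(N)) ≤ Ĝ'; (b) Ĝ = j(N)·Ĝ' (the join of j(N) and Ĝ' is all of Ĝ); (c) j⁻¹(Ĝ') = i⁻¹(G') as subgroups of N (i.e., 'N ∩ Ĝ' equals N' = N ∩ G''). -/
/-- Properties of `Ĝ' := ε̂⁻¹(ε(G'))` from the proof of the butterfly theorem:
`C_Ĝ(j(N)) ≤ Ĝ'`, `Ĝ = j(N)·Ĝ'` and `N ∩ Ĝ' = N ∩ G' (= N')`. -/
theorem butterfly_subgroup_properties (N G Ghat : Type) [Group N] [Group G] [Group Ghat]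
    (i : N →* G) (j : N →* Ghat)
    (hi : Function.Injective i) (hj : Function.Injective j)
    (hNi : i.range.Normal) (hNj : j.range.Normal)
    (ε : G →* MulAut N) (hε : ∀ (g : G) (n : N), i (ε g n) = g * i n * g⁻¹)
    (εhat : Ghat →* MulAut N)
    (hεhat : ∀ (x : Ghat) (n : N), j (εhat x n) = x * j n * x⁻¹)
    (G' : Subgroup G)
    (hCG' : Subgroup.centralizer (i.range : Set G) ≤ G')
    (hGG' : i.range ⊔ G' = ⊤)
    (hrange : ε.range = εhat.range) :
    Subgroup.centralizer (j.range : Set Ghat) ≤ (G'.map ε).comap εhat ∧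
    j.range ⊔ (G'.map ε).comap εhat = ⊤ ∧
    ((G'.map ε).comap εhat).comap j = G'.comap i := by
  have h1 : ∀ n, ε (i n) = MulAut.conj n := by
    intro n
    ext m
    apply hi
    rw [hε]
    simp
  have h2 : ∀ n, εhat (j n) = MulAut.conj n := by
    intro n
    ext m
    apply hj
    rw [hεhat]
    simp
  refine ⟨?_, ?_, ?_⟩
  · intro x hx
    rw [Subgroup.mem_centralizer_iff] at hx
    have : εhat x = 1 := by
      ext m
      apply hj
      rw [hεhat, ← hx (j m) ⟨m, rfl⟩]
      simp
    rw [Subgroup.mem_comap, this]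
    exact one_mem _
  · rw [eq_top_iff]
    intro x _
    have hx : εhat x ∈ ε.range := by
      rw [hrange]
      exact ⟨x, rfl⟩
    obtain ⟨g, hg⟩ := hx
    have hgt : g ∈ i.range ⊔ G' := by
      rw [hGG']
      trivial
    rw [Subgroup.mem_sup_of_normal_left] at hgt
    obtain ⟨_, ⟨n, rfl⟩, g', hg', rfl⟩ := hgt
    have hx : x = j n * ((j n)⁻¹ * x) := by group
    rw [hx]
    refine Subgroup.mul_mem_sup ⟨n, rfl⟩ ?_
    rw [Subgroup.mem_comap]
    refine ⟨g', hg', ?_⟩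
    rw [map_mul, map_inv, ← hg, map_mul, h1, h2]
    group
  · ext n
    simp only [Subgroup.mem_comap]
    rw [h2, ← h1]
    constructor
    · rintro ⟨g, hg, h⟩
      have hc : g⁻¹ * i n ∈ G' := by
        apply hCG'
        rw [Subgroup.mem_centralizer_iff]
        rintro _ ⟨m, rfl⟩
        have h3 := hε (g⁻¹ * i n) m
        rw [map_mul, map_inv, h, inv_mul_cancel, MulAut.one_apply] at h3
        exact eq_mul_inv_iff_mul_eq.mp h3
      have := G'.mul_mem hg hc
      simpa using this
    · intro h
      exact ⟨_, h, rfl⟩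
end

section
/- Then N·C is a normal subgroup of G, N'·C is a normal subgroup of G', G' ∩ (N·C) = N'·C, and the inclusion G' ↪ G induces a group isomorphism G'/(N'·C) ≅ G/(N·C). (Consequently, any complete set of representatives of the cosets of N'·C_G(N) in G' is also a complete set of representatives of the cosets of N·C_G(N) in G.) -/
/-- The centralizer of a normal subgroup is normal. -/
instance centralizerNormal (G : Type) [Group G] (N : Subgroup G) [hN : N.Normal] :
    (Subgroup.centralizer (N : Set G)).Normal := by
  constructor
  intro c hc g
  rw [Subgroup.mem_centralizer_iff] at hc ⊢
  intro n hn
  have hn' : g⁻¹ * n * g⁻¹⁻¹ ∈ (N : Set G) := hN.conj_mem n hn g⁻¹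
  have hcomm := hc _ hn'
  calc n * (g * c * g⁻¹) = g * ((g⁻¹ * n * g⁻¹⁻¹) * c) * g⁻¹ := by group
    _ = g * (c * (g⁻¹ * n * g⁻¹⁻¹)) * g⁻¹ := by rw [hcomm]
    _ = (g * c * g⁻¹) * n := by group

/-- If `C_G(N) ≤ G'`, then `N'·C_G(N)` is normal in `G'`, where `N' = G' ⊓ N`. -/
theorem joinNormalInG' (G : Type) [Group G] (N : Subgroup G) [hN : N.Normal]
    (G' : Subgroup G) (hC : Subgroup.centralizer (N : Set G) ≤ G') :
    (((G' ⊓ N) ⊔ Subgroup.centralizer (N : Set G)).subgroupOf G').Normal := by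
  constructor
  rintro ⟨x, hxG'⟩ hx ⟨g, hgG'⟩
  simp only [Subgroup.mem_subgroupOf] at hx ⊢
  have key : (G' ⊓ N) ⊔ Subgroup.centralizer (N : Set G) ≤
      Subgroup.comap (MulAut.conj g).toMonoidHom
        ((G' ⊓ N) ⊔ Subgroup.centralizer (N : Set G)) := by
    refine sup_le ?_ ?_
    · intro n hn
      rcases Subgroup.mem_inf.mp hn with ⟨h1, h2⟩
      refine Subgroup.mem_comap.mpr (Subgroup.mem_sup_left (Subgroup.mem_inf.mpr ⟨?_, ?_⟩))
      · simpa [MulAut.conj_apply] using mul_mem (mul_mem hgG' h1) (inv_mem hgG')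
      · simpa [MulAut.conj_apply] using hN.conj_mem n h2 g
    · intro c hc
      exact Subgroup.mem_comap.mpr
        (Subgroup.mem_sup_right
          ((centralizerNormal G N).conj_mem c hc g))
  have hmem := key hx
  simpa [MulAut.conj_apply] using hmem

/-- `N·C_G(N)` is normal in `G`, `N'·C_G(N)` is normal in `G'`,
`G' ∩ (N·C_G(N)) = N'·C_G(N)`, and the inclusion `G' ↪ G` induces an isomorphism
`G'/(N'·C_G(N)) ≅ G/(N·C_G(N))`. -/
theorem join_centralizer_iso (G : Type) [Group G] (N : Subgroup G) [hN : N.Normal]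
    (G' : Subgroup G) (hC : Subgroup.centralizer (N : Set G) ≤ G')
    (hGG' : N ⊔ G' = ⊤) :
    (N ⊔ Subgroup.centralizer (N : Set G)).Normal ∧
    (((G' ⊓ N) ⊔ Subgroup.centralizer (N : Set G)).subgroupOf G').Normal ∧
    G' ⊓ (N ⊔ Subgroup.centralizer (N : Set G)) =
      (G' ⊓ N) ⊔ Subgroup.centralizer (N : Set G) ∧
    ∃ φ : haveI := joinNormalInG' G N G' hC
        (↥G' ⧸ ((G' ⊓ N) ⊔ Subgroup.centralizer (N : Set G)).subgroupOf G') ≃*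
          (G ⧸ (N ⊔ Subgroup.centralizer (N : Set G))),
      ∀ g' : ↥G', φ (QuotientGroup.mk g') = QuotientGroup.mk (g' : G) := by
  have h3 : G' ⊓ (N ⊔ Subgroup.centralizer (N : Set G)) =
      (G' ⊓ N) ⊔ Subgroup.centralizer (N : Set G) := by
    apply le_antisymm
    · intro x hx
      obtain ⟨hx1, hx2⟩ := Subgroup.mem_inf.mp hx
      obtain ⟨n, hn, c, hc, rfl⟩ := Subgroup.mem_sup_of_normal_left.mp hx2
      refine Subgroup.mul_mem_sup (Subgroup.mem_inf.mpr ⟨?_, hn⟩) hc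
      exact (Subgroup.mul_mem_cancel_right G' (hC hc)).mp hx1
    · exact sup_le (inf_le_inf_left _ le_sup_left) (le_inf hC le_sup_right)
  refine ⟨inferInstance, joinNormalInG' G N G' hC, h3, ?_⟩
  haveI := joinNormalInG' G N G' hC
  let f : ↥G' →* G ⧸ (N ⊔ Subgroup.centralizer (N : Set G)) :=
    (QuotientGroup.mk' _).comp G'.subtype
  have hk : ((G' ⊓ N) ⊔ Subgroup.centralizer (N : Set G)).subgroupOf G' = f.ker := by
    ext x
    rw [← h3, MonoidHom.mem_ker, Subgroup.mem_subgroupOf, Subgroup.mem_inf]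
    change _ ↔ ((x : G) : G ⧸ (N ⊔ Subgroup.centralizer (N : Set G))) = 1
    rw [QuotientGroup.eq_one_iff]
    exact ⟨fun h => h.2, fun h => ⟨x.2, h⟩⟩
  have hs : Function.Surjective f := by
    intro q
    obtain ⟨g, rfl⟩ := QuotientGroup.mk_surjective q
    have hg : g ∈ G' ⊔ N := by rw [sup_comm, hGG']; trivial
    obtain ⟨y, hy, n, hn, rfl⟩ := Subgroup.mem_sup_of_normal_right.mp hg
    refine ⟨⟨y, hy⟩, ?_⟩
    change ((y : G) : G ⧸ (N ⊔ Subgroup.centralizer (N : Set G))) = _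
    rw [QuotientGroup.eq]
    simpa using Subgroup.mem_sup_left hn
  exact ⟨(QuotientGroup.quotientMulEquivOfEq hk).trans
    (QuotientGroup.quotientKerEquivOfSurjective f hs), fun g' => rfl⟩
end
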